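/- Let G = ⟨x, y | x y² x⁻¹ = y³⟩ and let π : F(a,b) → G be the epimorphism from the free group on two generators a, b determined by a ↦ x and b ↦ y⁴. Then there is no single element w ∈ F(a,b) whose normal closure in F(a,b) equals ker π; in other words, the generating set {x, y⁴} does not support a one-relator presentation of G. -/

import Mathlib

/-- The single relator `x y² x⁻¹ y⁻³` in the free group on two generators. -/
def bsRels : Set (FreeGroup (Fin 2)) :=
  {FreeGroup.of 0 * FreeGroup.of 1 ^ 2 * (FreeGroup.of 0)⁻¹ * (FreeGroup.of 1 ^ 3)⁻¹}

/-- The Baumslag–Solitar group `G = ⟨x, y | x y² x⁻¹ = y³⟩`. -/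
abbrev BSGroup := PresentedGroup bsRels

/-- `x ∈ G`. -/
def bsX : BSGroup := PresentedGroup.of 0

/-- `y ∈ G`. -/
def bsY : BSGroup := PresentedGroup.of 1

/-- The epimorphism `π : F(a,b) → G`, `a ↦ x`, `b ↦ y⁴`. -/
def bsPi : FreeGroup (Fin 2) →* BSGroup :=
  FreeGroup.lift (fun i => if i = 0 then bsX else bsY ^ 4)

/-!
If `ker π` were the normal closure of `w`, every Fox derivative of an element of `ker π` would be a
left multiple of the corresponding derivative of `w`. Push the derivatives from `ℤ[G]` to the skew
Laurent ring `ℤ[ℚ] ⋊ ℤ`, in which `x` scales the exponents of `y` by `3 / 2`. There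
`∂w/∂a` right-divides `∂⁅a b a⁻¹, b⁆/∂a = (1 - y⁴) (1 - y⁶)`, a nonzero element of degree `0` in
`x`, so it is homogeneous in `x`. On the other hand `w`, rewritten in `x` and `y`, is a consequence
of `x y² x⁻¹ y⁻³`, and comparing `∂/∂y` then shows that `∂w/∂a` is a left multiple of `1 - y⁶`.
Hence so is `∂⁅a² b a⁻², b⁆/∂a`, whose part of degree `0` in `x` is `(1 - y⁴) (1 - y⁹)`. This is
absurd: `1 - y⁶` vanishes at a primitive sixth root of unity, while `(1 - y⁴) (1 - y⁹)` does not.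
-/

open scoped commutatorElement

section CrossedHom

variable {G R M : Type*} [Group G] [Ring R] [AddCommGroup M] [Module R M]

/-- `D` is a crossed homomorphism (derivation, 1-cocycle) from `G` to the `R`-module `M`, on which
`G` acts through the representation `ρ`. The Fox derivatives are the crossed homomorphisms on free
groups. -/
def IsCrossedHom (ρ : G →* R) (D : G → M) : Prop :=
  ∀ g h, D (g * h) = D g + ρ g • D h

namespace IsCrossedHom

variable {ρ : G →* R} {D : G → M}

lemma map_one (hD : IsCrossedHom ρ D) : D 1 = 0 := by
  simpa using hD 1 1

lemma map_inv (hD : IsCrossedHom ρ D) (g : G) : D g⁻¹ = -(ρ g⁻¹ • D g) := by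
  rw [eq_neg_iff_add_eq_zero, ← hD, inv_mul_cancel, hD.map_one]

lemma map_mul_inv_of_eq (hD : IsCrossedHom ρ D) {g h : G} (hgh : ρ g = ρ h) :
    D (g * h⁻¹) = D g - D h := by
  rw [hD, hD.map_inv, hgh, smul_neg, smul_smul, ← map_mul, mul_inv_cancel, _root_.map_one,
    one_smul, sub_eq_add_neg]

lemma map_conj (hD : IsCrossedHom ρ D) (g h : G) :
    D (g * h * g⁻¹) = D g + ρ g • D h - ρ (g * h * g⁻¹) • D g := by
  rw [eq_sub_iff_add_eq, ← hD, ← hD, inv_mul_cancel_right]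

lemma map_commutatorElement (hD : IsCrossedHom ρ D) {g h : G} (hgh : Commute (ρ g) (ρ h)) :
    D ⁅g, h⁆ = (1 - ρ h) • D g - (1 - ρ g) • D h := by
  have hρ : ρ (g * h) = ρ (h * g) := by rw [map_mul, map_mul, hgh.eq]
  rw [commutatorElement_def, mul_assoc, ← mul_inv_rev, hD.map_mul_inv_of_eq hρ, hD, hD,
    sub_smul, sub_smul, one_smul, one_smul]
  abel

lemma comp_monoidHom {H : Type*} [Group H] (hD : IsCrossedHom ρ D) (θ : H →* G) :
    IsCrossedHom (ρ.comp θ) (D ∘ θ) := fun g h => by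
  simp only [Function.comp_apply, map_mul, hD (θ g), MonoidHom.comp_apply]

lemma linearMap_comp {N : Type*} [AddCommGroup N] [Module R N] (hD : IsCrossedHom ρ D)
    (f : M →ₗ[R] N) : IsCrossedHom ρ (f ∘ D) := fun g h => by
  simp only [Function.comp_apply, hD g, map_add, map_smul]

lemma mem_span_of_mem_normalClosure (hD : IsCrossedHom ρ D) {S : Set G}
    (hS : ∀ s ∈ S, ρ s = 1) {g : G} (hg : g ∈ Subgroup.normalClosure S) :
    D g ∈ Submodule.span R (D '' S) := by
  have hker : Subgroup.normalClosure S ≤ ρ.ker := Subgroup.normalClosure_le_normal hS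
  induction hg using Subgroup.closure_induction with
  | mem k hk =>
    obtain ⟨s, hs, hsk⟩ := Group.mem_conjugatesOfSet_iff.mp hk
    obtain ⟨c, rfl⟩ := isConj_iff.mp hsk
    have hconj : D (c * s * c⁻¹) = ρ c • D s := by
      rw [hD.map_conj, hker (Subgroup.conjugatesOfSet_subset_normalClosure hk), one_smul,
        add_sub_cancel_left]
    rw [hconj]
    exact Submodule.smul_mem _ _ (Submodule.subset_span ⟨s, hs, rfl⟩)
  | one => simp only [hD.map_one, Submodule.zero_mem]
  | mul g h _ _ ihg ihh =>
    rw [hD]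
    exact Submodule.add_mem _ ihg (Submodule.smul_mem _ _ ihh)
  | inv g _ ih =>
    rw [hD.map_inv]
    exact Submodule.neg_mem _ (Submodule.smul_mem _ _ ih)

lemma eq_of_eq_on_generators {ι : Type*} {ρ : FreeGroup ι →* R} {D E : FreeGroup ι → M}
    (hD : IsCrossedHom ρ D) (hE : IsCrossedHom ρ E)
    (h : ∀ i, D (FreeGroup.of i) = E (FreeGroup.of i)) : D = E := by
  funext g
  induction g using FreeGroup.induction_on with
  | C1 => rw [hD.map_one, hE.map_one]
  | of i => exact h i
  | inv_of i ih => rw [hD.map_inv, hE.map_inv, ih]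
  | mul g k ihg ihk => rw [hD, hE, ihg, ihk]

end IsCrossedHom

section FoxDerivative

variable {ι : Type*} (ρ : FreeGroup ι →* R) (v : ι → M)

/-- The action of the free group on `M` by affine maps in which the generator `i` acts as
`m ↦ v i + ρ i • m`. -/
def foxAffineAction : FreeGroup ι →* Equiv.Perm M :=
  FreeGroup.lift fun i =>
    Equiv.addLeft (v i) * MulAction.toPermHom Rˣ M (ρ.toHomUnits (FreeGroup.of i))

/-- The crossed homomorphism on a free group with prescribed values `v` on the generators: the
translation part of the affine action. For `M = ι → R` and `v` the standard basis its components
are the Fox derivatives. -/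
def foxDeriv (g : FreeGroup ι) : M :=
  foxAffineAction ρ v g 0

lemma foxAffineAction_apply (g : FreeGroup ι) (m : M) :
    foxAffineAction ρ v g m = foxDeriv ρ v g + ρ g • m := by
  have hgen (i : ι) (m : M) :
      foxAffineAction ρ v (FreeGroup.of i) m = v i + ρ (FreeGroup.of i) • m := by
    simp [foxAffineAction, Units.smul_def]
  unfold foxDeriv
  induction g using FreeGroup.induction_on generalizing m with
  | C1 => simp
  | of i => simp [hgen]
  | inv_of i _ =>
    have hinv (m : M) : foxAffineAction ρ v (FreeGroup.of i)⁻¹ m =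
        ρ (FreeGroup.of i)⁻¹ • (m - v i) := by
      rw [map_inv, Equiv.Perm.inv_eq_iff_eq, hgen, smul_smul, ← map_mul, mul_inv_cancel, map_one,
        one_smul, add_sub_cancel]
    rw [hinv, hinv, ← smul_add, zero_sub, neg_add_eq_sub]
  | mul g h ihg ihh =>
    rw [map_mul, Equiv.Perm.mul_apply, Equiv.Perm.mul_apply, ihg, ihh,
      ihg (foxAffineAction ρ v h 0), map_mul, mul_smul, smul_add, add_assoc]

lemma isCrossedHom_foxDeriv : IsCrossedHom ρ (foxDeriv ρ v) := fun g h => by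
  rw [← foxAffineAction_apply, foxDeriv, map_mul, Equiv.Perm.mul_apply, foxDeriv]

lemma foxDeriv_of (i : ι) : foxDeriv ρ v (FreeGroup.of i) = v i := by
  simp [foxDeriv, foxAffineAction]

end FoxDerivative

end CrossedHom

section SkewMonoidAlgebra

open SkewMonoidAlgebra

variable {A T : Type*}

lemma coeff_mul_mul_of_uniqueMul [Semiring A] [Monoid T] [MulSemiringAction T A]
    {u p : SkewMonoidAlgebra A T} {s t : T} (h : UniqueMul u.support p.support s t)
    (hs : s ∈ u.support) (ht : t ∈ p.support) :
    (u * p).coeff (s * t) = u.coeff s * s • p.coeff t := by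
  classical
  rw [coeff_mul, sum_def', Finset.sum_eq_single_of_mem s hs, sum_def',
    Finset.sum_eq_single_of_mem t ht, if_pos rfl]
  · exact fun t' ht' hne => if_neg fun heq => hne (h hs ht' heq).2
  · intro s' hs' hne
    rw [sum_def']
    exact Finset.sum_eq_zero fun t' ht' => if_neg fun heq => hne (h hs' ht' heq).1

lemma exists_eq_single_of_card_support [AddCommMonoid A] {u : SkewMonoidAlgebra A T}
    (hu : u.support.card = 1) : ∃ i r, u = single i r := by
  obtain ⟨i, r, -, h⟩ := Finsupp.card_support_eq_one'.mp hu
  exact ⟨i, r, coeff_injective (by rw [h, coeff_single])⟩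

variable [Group T]

/-- Two products that are each attained only once would give the right-hand side two distinct
elements in its support. -/
lemma exists_eq_single_of_mul_eq_single [TwoUniqueProds T] [Semiring A] [NoZeroDivisors A]
    [MulSemiringAction T A] {u p : SkewMonoidAlgebra A T} {g : T} {f : A} (hf : f ≠ 0)
    (h : u * p = single g f) :
    (∃ i r, u = single i r) ∧ ∃ j r, p = single j r := by
  have hne : u * p ≠ 0 := by rwa [h, Ne, single_eq_zero]
  have hu : u.support.card ≠ 0 := by
    simpa only [Ne, Finset.card_eq_zero, support_eq_empty] using left_ne_zero_of_mul hne
  have hp : p.support.card ≠ 0 := by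
    simpa only [Ne, Finset.card_eq_zero, support_eq_empty] using right_ne_zero_of_mul hne
  have hunique {s t : T} (hst : (s, t) ∈ u.support ×ˢ p.support)
      (hmul : UniqueMul u.support p.support s t) : s * t = g := by
    classical
    obtain ⟨hs, ht⟩ := Finset.mem_product.mp hst
    have hcoeff := coeff_mul_mul_of_uniqueMul hmul hs ht
    rw [h, coeff_single_apply] at hcoeff
    refine (ite_ne_right_iff.mp (hcoeff.trans_ne (mul_ne_zero (mem_support_iff.mp hs) ?_))).1.symm
    rw [Ne, smul_eq_zero_iff_eq]
    exact mem_support_iff.mp ht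
  have hcard : u.support.card * p.support.card = 1 := by
    by_contra hcard
    obtain ⟨st, hst, st', hst', hne', hmul, hmul'⟩ :=
      TwoUniqueProds.uniqueMul_of_one_lt_card (A := u.support) (B := p.support)
        (lt_of_le_of_ne (Nat.one_le_iff_ne_zero.mpr (Nat.mul_ne_zero hu hp)) (Ne.symm hcard))
    obtain ⟨hst1, hst2⟩ := Finset.mem_product.mp hst
    obtain ⟨heq₁, heq₂⟩ :=
      hmul' hst1 hst2 ((hunique hst hmul).trans (hunique hst' hmul').symm)
    exact hne' (Prod.ext heq₁ heq₂)
  obtain ⟨hcu, hcp⟩ := mul_eq_one.mp hcard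
  exact ⟨exists_eq_single_of_card_support hcu, exists_eq_single_of_card_support hcp⟩

variable [CommRing A] [IsDomain A] [MulSemiringAction T A] {x : T} {y : A}

/-- The coefficient of `q * (1 + y) (1 + y²)` at `j * x` is divisible by
`(j * x) • (1 + y²) = j • (1 + y³)`. -/
lemma exists_eq_mul_smul_of_mul_single_one_eq (hx : x ≠ 1) (hxy : (x • y) ^ 2 = y ^ 3)
    (hy : 1 + y ≠ 0) {q : SkewMonoidAlgebra A T} {j : T} {γ : A}
    (hq : q * single 1 (1 + y + y ^ 2 + y ^ 3) =
      single j γ * (single x 1 * single 1 (1 + y) - single 1 (1 + y + y ^ 2))) :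
    ∃ δ, γ = δ * j • (1 + y ^ 3) := by
  have hcoeff : q.coeff (j * x) * (j * x) • (1 + y + y ^ 2 + y ^ 3) = γ * (j * x) • (1 + y) := by
    classical
    have h := congrArg (fun z => z.coeff (j * x)) hq
    simpa only [mul_sub, single_mul_single, coeff_mul_single_one, coeff_sub, coeff_single_apply,
      mul_one, one_mul, mul_smul, smul_one, Finsupp.coe_sub, Pi.sub_apply, left_eq_mul, hx,
      if_true, if_false, sub_zero] using h
  have hfactor : (j * x) • (1 + y + y ^ 2 + y ^ 3) = j • (1 + y ^ 3) * (j * x) • (1 + y) := by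
    have hx2 : (j * x) • (1 + y ^ 2) = j • (1 + y ^ 3) := by
      rw [mul_smul, smul_add, smul_one, smul_pow', hxy]
    rw [← hx2, ← smul_mul']
    ring_nf
  rw [hfactor, ← mul_assoc] at hcoeff
  exact ⟨q.coeff (j * x), (mul_right_cancel₀ ((smul_ne_zero_iff_ne _).mpr hy) hcoeff).symm⟩

lemma exists_eq_mul_single_one_sub_pow_six [TwoUniqueProds T] (hx : x ≠ 1)
    (hxy : (x • y) ^ 2 = y ^ 3) (hy : 1 + y ≠ 0) {p q c u : SkewMonoidAlgebra A T}
    (hp : p = c * single 1 (1 - y ^ 3))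
    (hq : q * single 1 (1 + y + y ^ 2 + y ^ 3) =
      c * (single x 1 * single 1 (1 + y) - single 1 (1 + y + y ^ 2)))
    {f : A} (hf : f ≠ 0) (hu : u * p = single 1 f) :
    ∃ s, p = s * single 1 (1 - y ^ 6) := by
  have hp0 : p ≠ 0 := right_ne_zero_of_mul (a := u) (by rwa [hu, Ne, single_eq_zero])
  obtain ⟨-, i, r, hpi⟩ := exists_eq_single_of_mul_eq_single hf hu
  have hr : r ≠ 0 := by rwa [hpi, Ne, single_eq_zero] at hp0
  obtain ⟨⟨j, γ, rfl⟩, -⟩ := exists_eq_single_of_mul_eq_single hr (hp.symm.trans hpi)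
  obtain ⟨δ, rfl⟩ := exists_eq_mul_smul_of_mul_single_one_eq hx hxy hy hq
  refine ⟨single j δ, ?_⟩
  rw [hp, single_mul_single, single_mul_single, mul_assoc, ← smul_mul']
  ring_nf

end SkewMonoidAlgebra

section BaumslagSolitar

local notation "a" => FreeGroup.of (0 : Fin 2)
local notation "b" => FreeGroup.of (1 : Fin 2)

lemma bsRels_eq : bsRels = {(a * b ^ 2) * (b ^ 3 * a)⁻¹} := by
  rw [bsRels, mul_inv_rev, mul_assoc]

lemma semiconjBy_bsX : SemiconjBy bsX (bsY ^ 2) (bsY ^ 3) :=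
  PresentedGroup.mk_eq_mk_of_mul_inv_mem (rels := bsRels) (by rw [bsRels_eq]; rfl)

/-- The substitution `a ↦ x`, `b ↦ y⁴` in words, which lifts `bsPi` to the free group on `x` and
`y`. -/
def bsSubst : FreeGroup (Fin 2) →* FreeGroup (Fin 2) :=
  FreeGroup.lift ![a, b ^ 4]

lemma mk_comp_bsSubst : (PresentedGroup.mk bsRels).comp bsSubst = bsPi := by
  ext i
  fin_cases i <;> simp [bsPi, bsSubst, bsX, bsY, PresentedGroup.of]

lemma bsPi_a : bsPi a = bsX := by simp [bsPi]

lemma bsPi_b : bsPi b = bsY ^ 4 := by simp [bsPi]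

lemma bsPi_conj_b : bsPi (a * b * a⁻¹) = bsY ^ 6 := by
  have h : SemiconjBy bsX (bsY ^ 4) (bsY ^ 6) := by
    simpa only [← pow_mul] using semiconjBy_bsX.pow_right 2
  rw [map_mul, map_mul, map_inv, bsPi_a, bsPi_b, h.eq, mul_inv_cancel_right]

lemma bsPi_conj_conj_b : bsPi (a * (a * b * a⁻¹) * a⁻¹) = bsY ^ 9 := by
  have h : SemiconjBy bsX (bsY ^ 6) (bsY ^ 9) := by
    simpa only [← pow_mul] using semiconjBy_bsX.pow_right 3
  rw [map_mul, map_mul, map_inv, bsPi_a, bsPi_conj_b, h.eq, mul_inv_cancel_right]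

lemma commutatorElement_mem_ker_bsPi {g h : FreeGroup (Fin 2)} {m n : ℕ}
    (hg : bsPi g = bsY ^ m) (hh : bsPi h = bsY ^ n) : ⁅g, h⁆ ∈ bsPi.ker := by
  rw [MonoidHom.mem_ker, map_commutatorElement, hg, hh, commutatorElement_eq_one_iff_commute]
  exact Commute.pow_pow_self bsY m n

lemma exists_monoidHom_bsGroup {N : Type*} [Monoid N] {X Y : N} (hX : IsUnit X) (hY : IsUnit Y)
    (hXY : SemiconjBy X (Y ^ 2) (Y ^ 3)) :
    ∃ φ : BSGroup →* N, φ bsX = X ∧ φ bsY = Y := by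
  obtain ⟨X, rfl⟩ := hX
  obtain ⟨Y, rfl⟩ := hY
  have hXY' : X * Y ^ 2 = Y ^ 3 * X := Units.ext (by simpa using hXY.eq)
  have hrel : ∀ r ∈ bsRels, FreeGroup.lift ![X, Y] r = 1 := by
    rw [bsRels_eq]
    rintro _ rfl
    simp [hXY']
  exact ⟨(Units.coeHom N).comp (PresentedGroup.toGroup hrel), by simp [bsX], by simp [bsY]⟩

variable {R : Type*} [Ring R] (φ : BSGroup →* R)

local notation "X" => φ bsX
local notation "Y" => φ bsY

section Commutators

variable {φ} {M : Type*} [AddCommGroup M] [Module R M] {D : FreeGroup (Fin 2) → M}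

lemma IsCrossedHom.map_conj_b (hD : IsCrossedHom (φ.comp bsPi) D) (hDb : D b = 0) :
    D (a * b * a⁻¹) = (1 - Y ^ 6) • D a := by
  rw [hD.map_conj, MonoidHom.comp_apply, MonoidHom.comp_apply, bsPi_conj_b, map_pow, hDb, smul_zero,
    add_zero, sub_smul, one_smul]

lemma IsCrossedHom.map_conj_conj_b (hD : IsCrossedHom (φ.comp bsPi) D) (hDb : D b = 0) :
    D (a * (a * b * a⁻¹) * a⁻¹) = (1 - Y ^ 9 + X * (1 - Y ^ 6)) • D a := by
  rw [hD.map_conj, MonoidHom.comp_apply, MonoidHom.comp_apply, bsPi_conj_conj_b, bsPi_a, map_pow,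
    hD.map_conj_b hDb, smul_smul, add_smul, sub_smul, one_smul]
  abel

lemma IsCrossedHom.map_commutatorElement_b (hD : IsCrossedHom (φ.comp bsPi) D) (hDb : D b = 0)
    {g : FreeGroup (Fin 2)} {n : ℕ} (hg : bsPi g = bsY ^ n) :
    D ⁅g, b⁆ = (1 - Y ^ 4) • D g := by
  have hcomm : Commute (φ (bsPi g)) (φ (bsPi b)) := by
    rw [hg, bsPi_b]
    exact (Commute.pow_pow_self bsY n 4).map φ
  rw [hD.map_commutatorElement hcomm, hDb, smul_zero, sub_zero, MonoidHom.comp_apply, bsPi_b,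
    map_pow]

end Commutators

/-- The pair of Fox derivatives `(∂/∂a, ∂/∂b)`, evaluated in `R` through `φ ∘ π`. -/
def bsFox : FreeGroup (Fin 2) → R × R :=
  foxDeriv (φ.comp bsPi) ![(1, 0), (0, 1)]

lemma isCrossedHom_bsFox : IsCrossedHom (φ.comp bsPi) (bsFox φ) :=
  isCrossedHom_foxDeriv _ _

lemma isCrossedHom_fst_bsFox : IsCrossedHom (φ.comp bsPi) fun g => (bsFox φ g).1 :=
  (isCrossedHom_bsFox φ).linearMap_comp (LinearMap.fst R R R)

lemma bsFox_a : bsFox φ a = (1, 0) := foxDeriv_of _ _ _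

lemma bsFox_b : bsFox φ b = (0, 1) := foxDeriv_of _ _ _

lemma bsFox_commutatorElement_conj_b_fst :
    (bsFox φ ⁅a * b * a⁻¹, b⁆).1 = (1 - Y ^ 4) * (1 - Y ^ 6) := by
  have hb : (bsFox φ b).1 = 0 := by rw [bsFox_b]
  rw [(isCrossedHom_fst_bsFox φ).map_commutatorElement_b hb bsPi_conj_b,
    (isCrossedHom_fst_bsFox φ).map_conj_b hb, bsFox_a, smul_eq_mul, smul_eq_mul, mul_one]

lemma bsFox_commutatorElement_conj_conj_b_fst :
    (bsFox φ ⁅a * (a * b * a⁻¹) * a⁻¹, b⁆).1 =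
      (1 - Y ^ 4) * (1 - Y ^ 9 + X * (1 - Y ^ 6)) := by
  have hb : (bsFox φ b).1 = 0 := by rw [bsFox_b]
  rw [(isCrossedHom_fst_bsFox φ).map_commutatorElement_b hb bsPi_conj_conj_b,
    (isCrossedHom_fst_bsFox φ).map_conj_conj_b hb, bsFox_a, smul_eq_mul, smul_eq_mul, mul_one]

/-- The pair of Fox derivatives `(∂/∂x, ∂/∂y)` on the free group on `x`, `y`, evaluated in `R`. -/
def xyFox : FreeGroup (Fin 2) → R × R :=
  foxDeriv (φ.comp (PresentedGroup.mk bsRels)) ![(1, 0), (0, 1)]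

lemma isCrossedHom_xyFox : IsCrossedHom (φ.comp (PresentedGroup.mk bsRels)) (xyFox φ) :=
  isCrossedHom_foxDeriv _ _

lemma xyFox_x : xyFox φ a = (1, 0) := foxDeriv_of _ _ _

lemma xyFox_y : xyFox φ b = (0, 1) := foxDeriv_of _ _ _

lemma xyFox_relator :
    xyFox φ (a * b ^ 2 * (b ^ 3 * a)⁻¹) = (1 - Y ^ 3, X * (1 + Y) - (1 + Y + Y ^ 2)) := by
  have hD := isCrossedHom_xyFox φ
  have hρx : φ.comp (PresentedGroup.mk bsRels) a = X := rfl
  have hρy : φ.comp (PresentedGroup.mk bsRels) b = Y := rfl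
  have hρ : φ.comp (PresentedGroup.mk bsRels) (a * b ^ 2) =
      φ.comp (PresentedGroup.mk bsRels) (b ^ 3 * a) := congrArg φ semiconjBy_bsX.eq
  rw [hD.map_mul_inv_of_eq hρ]
  ext <;> simp [pow_succ, hD _ _, xyFox_x, xyFox_y, hρx, hρy, mul_add, mul_assoc, add_assoc]

/-- Chain rule for Fox derivatives: the factor is `∂(y⁴)/∂y`. -/
lemma xyFox_bsSubst (g : FreeGroup (Fin 2)) :
    xyFox φ (bsSubst g) = ((bsFox φ g).1, (bsFox φ g).2 * (1 + Y + Y ^ 2 + Y ^ 3)) := by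
  have hD := isCrossedHom_xyFox φ
  have hcomp := hD.comp_monoidHom bsSubst
  rw [MonoidHom.comp_assoc, mk_comp_bsSubst] at hcomp
  have hlin := (isCrossedHom_bsFox φ).linearMap_comp
    (LinearMap.prodMap LinearMap.id (LinearMap.toSpanSingleton R R (1 + Y + Y ^ 2 + Y ^ 3)))
  refine congrFun (hcomp.eq_of_eq_on_generators hlin fun i => ?_) g
  have hρy : φ.comp (PresentedGroup.mk bsRels) b = Y := rfl
  fin_cases i
  · simp [bsSubst, xyFox_x, bsFox_a]
  · simp [bsSubst, pow_succ, hD _ _, xyFox_y, hρy, bsFox_b, mul_add, mul_assoc, add_assoc]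

lemma exists_bsFox_eq_of_mem_ker {g : FreeGroup (Fin 2)} (hg : g ∈ bsPi.ker) :
    ∃ c : R, (bsFox φ g).1 = c * (1 - Y ^ 3) ∧
      (bsFox φ g).2 * (1 + Y + Y ^ 2 + Y ^ 3) = c * (X * (1 + Y) - (1 + Y + Y ^ 2)) := by
  rw [← mk_comp_bsSubst, MonoidHom.mem_ker, MonoidHom.comp_apply,
    PresentedGroup.mk_eq_one_iff] at hg
  have hrels : ∀ r ∈ bsRels, φ.comp (PresentedGroup.mk bsRels) r = 1 := fun r hr => by
    rw [MonoidHom.comp_apply, PresentedGroup.one_of_mem hr, map_one]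
  have hspan := (isCrossedHom_xyFox φ).mem_span_of_mem_normalClosure hrels hg
  rw [bsRels_eq, Set.image_singleton, xyFox_relator, xyFox_bsSubst,
    Submodule.mem_span_singleton] at hspan
  obtain ⟨c, hc⟩ := hspan
  exact ⟨c, (congrArg Prod.fst hc).symm, (congrArg Prod.snd hc).symm⟩

lemma exists_mul_bsFox_fst_of_mem_normalClosure {w g : FreeGroup (Fin 2)} (hw : w ∈ bsPi.ker)
    (hg : g ∈ Subgroup.normalClosure {w}) : ∃ u : R, u * (bsFox φ w).1 = (bsFox φ g).1 := by
  have hρ : ∀ s ∈ ({w} : Set (FreeGroup (Fin 2))), φ.comp bsPi s = 1 := by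
    rintro _ rfl
    rw [MonoidHom.comp_apply, hw, map_one]
  simpa only [Set.image_singleton, Submodule.mem_span_singleton, smul_eq_mul] using
    (isCrossedHom_fst_bsFox φ).mem_span_of_mem_normalClosure hρ hg

lemma exists_foxRelations_of_normalClosure_eq_ker {w : FreeGroup (Fin 2)}
    (hw : Subgroup.normalClosure {w} = bsPi.ker) :
    ∃ p q c u v : R, p = c * (1 - Y ^ 3) ∧
      q * (1 + Y + Y ^ 2 + Y ^ 3) = c * (X * (1 + Y) - (1 + Y + Y ^ 2)) ∧
      u * p = (1 - Y ^ 4) * (1 - Y ^ 6) ∧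
      v * p = (1 - Y ^ 4) * (1 - Y ^ 9 + X * (1 - Y ^ 6)) := by
  have hwker : w ∈ bsPi.ker := hw ▸ Subgroup.subset_normalClosure rfl
  have hmem {g : FreeGroup (Fin 2)} {n : ℕ} (hg : bsPi g = bsY ^ n) :
      ⁅g, b⁆ ∈ Subgroup.normalClosure {w} :=
    hw ▸ commutatorElement_mem_ker_bsPi hg bsPi_b
  obtain ⟨c, hp, hq⟩ := exists_bsFox_eq_of_mem_ker φ hwker
  obtain ⟨u, hu⟩ := exists_mul_bsFox_fst_of_mem_normalClosure φ hwker (hmem bsPi_conj_b)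
  obtain ⟨v, hv⟩ := exists_mul_bsFox_fst_of_mem_normalClosure φ hwker (hmem bsPi_conj_conj_b)
  rw [bsFox_commutatorElement_conj_b_fst] at hu
  rw [bsFox_commutatorElement_conj_conj_b_fst] at hv
  exact ⟨_, _, c, u, v, hp, hq, hu, hv⟩

end BaumslagSolitar

section SkewRepresentation

open SkewMonoidAlgebra

variable {A T : Type*} [Group T]

lemma exists_monoidHom_bsGroup_skewMonoidAlgebra [Semiring A] [MulSemiringAction T A] {x : T}
    {y : A} (hxy : (x • y) ^ 2 = y ^ 3) (hy : IsUnit y) :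
    ∃ φ : BSGroup →* SkewMonoidAlgebra A T,
      φ bsX = single x 1 ∧ φ bsY = singleOneRingHom y := by
  refine exists_monoidHom_bsGroup ((Group.isUnit x).map (of A T)) (hy.map singleOneRingHom) ?_
  have hpow (n : ℕ) : (singleOneRingHom y : SkewMonoidAlgebra A T) ^ n = single 1 (y ^ n) :=
    (map_pow singleOneRingHom y n).symm
  rw [SemiconjBy, hpow, hpow, single_mul_single, single_mul_single, smul_pow', hxy]
  simp only [one_mul, mul_one, one_smul]

lemma one_sub_pow_six_dvd_of_normalClosure_eq_ker [CommRing A] [IsDomain A] [TwoUniqueProds T]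
    [MulSemiringAction T A] {x : T} {y : A} (hx : x ≠ 1) (hxy : (x • y) ^ 2 = y ^ 3)
    (hy : IsUnit y) (hy12 : y ^ 12 ≠ 1) {w : FreeGroup (Fin 2)}
    (hw : Subgroup.normalClosure {w} = bsPi.ker) :
    1 - y ^ 6 ∣ (1 - y ^ 4) * (1 - y ^ 9) := by
  obtain ⟨φ, hφx, hφy⟩ := exists_monoidHom_bsGroup_skewMonoidAlgebra hxy hy
  obtain ⟨p, q, c, u, v, hp, hq, hu, hv⟩ := exists_foxRelations_of_normalClosure_eq_ker φ hw
  simp only [hφx, hφy, ← map_pow, ← map_add, ← map_sub, ← map_mul,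
    ← map_one (singleOneRingHom (k := A) (G := T))] at hp hq hu hv
  have hy1 : 1 + y ≠ 0 := fun h => hy12 (by rw [eq_neg_of_add_eq_zero_right h]; norm_num)
  have hf : (1 - y ^ 4) * (1 - y ^ 6) ≠ 0 :=
    mul_ne_zero (sub_ne_zero.mpr fun h => hy12 (by rw [pow_mul y 4 3, ← h, one_pow]))
      (sub_ne_zero.mpr fun h => hy12 (by rw [pow_mul y 6 2, ← h, one_pow]))
  obtain ⟨s, rfl⟩ := exists_eq_mul_single_one_sub_pow_six hx hxy hy1 hp hq hf hu
  have hcoeff : (v * (s * single 1 (1 - y ^ 6))).coeff 1 = (1 - y ^ 4) * (1 - y ^ 9) := by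
    classical
    have hC (r : A) : singleOneRingHom r = single (1 : T) r := rfl
    rw [hv, hC, hC, hC, coeff_single_one_mul, single_mul_single, coeff_add, Finsupp.add_apply,
      coeff_single_apply, coeff_single_apply, if_pos rfl, mul_one, if_neg hx, add_zero]
  rw [← mul_assoc, coeff_mul_single_one, one_smul] at hcoeff
  exact Dvd.intro_left _ hcoeff

end SkewRepresentation

section RationalLaurent

open AddMonoidAlgebra

/-- Rescaling the exponents of the rational Laurent polynomials `ℤ[ℚ]` by `3 / 2`; it sends `y²` to
`y³` for every monomial `y`. -/
noncomputable def scaleExponents : RingAut (AddMonoidAlgebra ℤ ℚ) :=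
  (domCongr ℤ ℤ
    (DistribMulAction.toAddEquiv ℚ (Units.mk0 (3 / 2 : ℚ) (by norm_num)))).toRingEquiv

lemma scaleExponents_single_pow_two (t : ℚ) :
    scaleExponents (single t 1) ^ 2 = single t 1 ^ 3 := by
  have h : scaleExponents (single t 1) = single (3 / 2 * t) 1 :=
    domCongr_single (R := ℤ) _ _ _
  rw [h, single_pow, single_pow]
  congr 1
  simp only [nsmul_eq_mul]
  push_cast
  ring

lemma exists_ringHom_isPrimitiveRoot {n : ℕ} (hn : n ≠ 0) :
    ∃ ev : AddMonoidAlgebra ℤ ℚ →+* ℂ, IsPrimitiveRoot (ev (single 1 1)) n := by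
  let χ : Multiplicative ℚ →* ℂ := Complex.expMonoidHom.comp
    (AddMonoidHom.toMultiplicative
      ((AddMonoidHom.mulLeft (2 * Real.pi * Complex.I / n)).comp (Rat.castHom ℂ).toAddMonoidHom))
  refine ⟨(lift ℤ ℂ ℚ χ).toRingHom, ?_⟩
  convert Complex.isPrimitiveRoot_exp n hn
  simp [χ, lift_single]

lemma not_one_sub_pow_six_dvd {R S : Type*} [CommRing R] [CommRing S] [IsDomain S]
    (ev : R →+* S) {y : R} (hev : IsPrimitiveRoot (ev y) 6) :
    ¬ 1 - y ^ 6 ∣ (1 - y ^ 4) * (1 - y ^ 9) := by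
  intro hdvd
  have h := map_dvd ev hdvd
  simp only [map_mul, map_sub, map_one, map_pow, hev.pow_eq_one, sub_self, zero_dvd_iff,
    mul_eq_zero, sub_eq_zero, eq_comm (a := (1 : S)), hev.pow_eq_one_iff_dvd] at h
  norm_num at h

end RationalLaurent

/-- There is no single element of `F(a,b)` whose normal closure is `ker π`:
the generating set `{x, y⁴}` of `G = ⟨x, y | x y² x⁻¹ = y³⟩` does not support
a one-relator presentation. -/
theorem no_one_relator_presentation_on_x_y4 :
    ¬ ∃ w : FreeGroup (Fin 2), Subgroup.normalClosure {w} = bsPi.ker := by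
  rintro ⟨w, hw⟩
  let _ : MulSemiringAction (Multiplicative ℤ) (AddMonoidAlgebra ℤ ℚ) :=
    MulSemiringAction.compHom _ (zpowersHom (RingAut (AddMonoidAlgebra ℤ ℚ)) scaleExponents)
  let x : Multiplicative ℤ := Multiplicative.ofAdd 1
  let y : AddMonoidAlgebra ℤ ℚ := AddMonoidAlgebra.single 1 1
  have hx : x ≠ 1 := by decide
  have hxy : (x • y) ^ 2 = y ^ 3 := by
    have hsmul : x • y = scaleExponents y := DFunLike.congr_fun (zpow_one scaleExponents) y
    rw [hsmul, scaleExponents_single_pow_two]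
  have hy : IsUnit y :=
    (Group.isUnit (Multiplicative.ofAdd (1 : ℚ))).map (AddMonoidAlgebra.of ℤ ℚ)
  have hy12 : y ^ 12 ≠ 1 := by
    rw [AddMonoidAlgebra.single_pow, one_pow, AddMonoidAlgebra.one_def]
    exact (AddMonoidAlgebra.single_left_injective one_ne_zero).ne (by norm_num)
  obtain ⟨ev, hev⟩ := exists_ringHom_isPrimitiveRoot (n := 6) (by norm_num)
  exact not_one_sub_pow_six_dvd ev hev
    (one_sub_pow_six_dvd_of_normalClosure_eq_ker hx hxy hy hy12 hw)
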